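/- arXiv:2306.09895 — 3 statements merged into one kernel-verified Lean document; each statement's English description precedes it below -/
import Mathlib

section
/- Let ν be a finite signed Borel measure on [0,∞), f : [0,∞) → ℝ locally integrable, let r be the differential resolvent of ν with r ∈ L¹([0,∞)), and for ξ ∈ ℝ let x(·;ξ) denote the solution of x′(t) = ∫_{[0,t]} x(t−s) dν(s) + f(t), x(0) = ξ. Then the following are equivalent: (A) x(·;ξ) is bounded, continuous, and tends to 0 at infinity, for every ξ ∈ ℝ; (B) for each θ ∈ (0,1], the function t ↦ ∫_t^{t+θ} f(s) ds is bounded, continuous, and tends to 0 at infinity. -/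
open MeasureTheory Set Filter

/-- The integral of `g` over the set `A` against the finite signed Borel measure `ν`,
defined through the Jordan decomposition `ν = ν⁺ - ν⁻`. -/
noncomputable def signedSetIntegral (ν : MeasureTheory.SignedMeasure ℝ) (g : ℝ → ℝ)
    (A : Set ℝ) : ℝ :=
  (∫ s in A, g s ∂ν.toJordanDecomposition.posPart)
    - ∫ s in A, g s ∂ν.toJordanDecomposition.negPart

/-!
Extend all functions by zero to the line, write `F` for the primitive of `f` and `x = f * r`. Since
`r → 0`, both conditions concern only `x` and the increments of `F`, which are tied together by the
integrated equations `x = F + ν * X`, with `X` the primitive of `x`, and `x = F + ν * (r * F)`.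

If `x → 0`, then every increment of `X` over a fixed step tends to `0`, so the first equation gives
the same for `F`.

Conversely, Baire's theorem upgrades `F (t + θ) - F t → 0` for each `θ` to a bound on
`F t - F s`, uniform in `s ∈ [t - c, t]`, for some `c > 0`. Put `p t = (F (t - c) - F t) / c`. Then
`p → 0`, hence `p * r → 0`. The primitive of `f + p` is `F` minus its moving average over
`[t - c, t]`, which tends to `0` by dominated convergence, so the second equation gives
`(f + p) * r → 0`.
-/

open scoped Convolution Topology fwdDiff
open ContinuousLinearMap (mul)

namespace Volterra

variable {μ : Measure ℝ} {f g k r x : ℝ → ℝ} {t T : ℝ}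

section Causal

/-- A function on the line vanishing on the negative half-line. Functions on `[0, ∞)` are extended
by zero, so that `∫ s in 0..t, f s * g (t - s)` becomes the convolution on the whole line. -/
def Causal (g : ℝ → ℝ) : Prop :=
  ∀ t < 0, g t = 0

/-- The zero extension of a locally integrable function on `[0, ∞)`. -/
structure CausalLocallyIntegrable (f : ℝ → ℝ) (μ : Measure ℝ := by volume_tac) : Prop where
  causal : Causal f
  integrableOn_Iic (T : ℝ) : IntegrableOn f (Iic T) μ

/-- The zero extension of a continuous function on `[0, ∞)`; it may jump at `0`. -/
structure CausalContinuous (g : ℝ → ℝ) : Prop where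
  causal : Causal g
  continuousOn : ContinuousOn g (Ici 0)

/-- The unit step, whose convolution with a causal function is the primitive of that function. -/
noncomputable def heaviside : ℝ → ℝ :=
  indicator (Ici 0) 1

theorem Causal.indicator_eq (hg : Causal g) : indicator (Ici 0) g = g :=
  indicator_eq_self.2 fun t ht => not_lt.1 fun h => ht (hg t h)

theorem causal_indicator (g : ℝ → ℝ) : Causal (indicator (Ici 0) g) := fun _ ht =>
  indicator_of_notMem (not_le.2 ht) g

theorem Causal.add (hf : Causal f) (hg : Causal g) : Causal (f + g) := fun t ht => by
  simp [hf t ht, hg t ht]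

theorem Causal.sub (hf : Causal f) (hg : Causal g) : Causal (f - g) := fun t ht => by
  simp [hf t ht, hg t ht]

theorem Causal.const_smul (hg : Causal g) (c : ℝ) : Causal (c • g) := fun t ht => by
  simp [hg t ht]

theorem Causal.convolution (hf : Causal f) (hg : Causal g) : Causal (f ⋆[mul ℝ ℝ, μ] g) := by
  intro t ht
  refine integral_eq_zero_of_ae (Eventually.of_forall fun s => ?_)
  rcases lt_or_ge s 0 with hs | hs
  · simp [hf s hs]
  · simp [hg (t - s) (by linarith)]

theorem Causal.convolution_apply (hf : Causal f) (hg : Causal g) (t : ℝ) :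
    (f ⋆[mul ℝ ℝ, μ] g) t = ∫ s in Icc 0 t, f s * g (t - s) ∂μ := by
  refine (setIntegral_eq_integral_of_forall_compl_eq_zero fun s hs => ?_).symm
  rcases lt_or_ge s 0 with h | h
  · simp [hf s h]
  · simp [hg (t - s) (by_contra fun hts => hs ⟨h, by linarith⟩)]

theorem convolution_mul_comm (f g : ℝ → ℝ) : f ⋆[mul ℝ ℝ] g = g ⋆[mul ℝ ℝ] f := by
  rw [← convolution_flip, ContinuousLinearMap.flip_mul]

end Causal

section Regularity

theorem CausalLocallyIntegrable.locallyIntegrable (hf : CausalLocallyIntegrable f μ) :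
    LocallyIntegrable f μ := fun t =>
  ⟨Iic (t + 1), Iic_mem_nhds (lt_add_one t), hf.integrableOn_Iic (t + 1)⟩

theorem CausalLocallyIntegrable.add (hf : CausalLocallyIntegrable f μ)
    (hg : CausalLocallyIntegrable g μ) : CausalLocallyIntegrable (f + g) μ :=
  ⟨hf.causal.add hg.causal, fun T => (hf.integrableOn_Iic T).add (hg.integrableOn_Iic T)⟩

theorem Causal.causalLocallyIntegrable (hf : Causal f) (hfi : LocallyIntegrableOn f (Ici 0) μ) :
    CausalLocallyIntegrable f μ := by
  refine ⟨hf, fun T => ?_⟩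
  rw [← hf.indicator_eq, IntegrableOn, integrable_indicator_iff measurableSet_Ici, IntegrableOn,
    Measure.restrict_restrict measurableSet_Ici, Ici_inter_Iic]
  exact hfi.integrableOn_compact_subset Icc_subset_Ici_self isCompact_Icc

theorem causalLocallyIntegrable_indicator (hf : LocallyIntegrableOn f (Ici 0) μ) :
    CausalLocallyIntegrable (indicator (Ici 0) f) μ :=
  (causal_indicator f).causalLocallyIntegrable <|
    hf.congr ((ae_restrict_iff' measurableSet_Ici).2
      (Eventually.of_forall fun _ ht => (indicator_of_mem ht f).symm))

theorem causalContinuous_indicator (hg : ContinuousOn g (Ici 0)) :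
    CausalContinuous (indicator (Ici 0) g) :=
  ⟨causal_indicator g, hg.congr fun _ ht => indicator_of_mem ht g⟩

theorem causalContinuous_heaviside : CausalContinuous heaviside :=
  causalContinuous_indicator continuousOn_const

theorem tendsto_heaviside : Tendsto heaviside atTop (𝓝 1) :=
  tendsto_const_nhds.congr' <| (eventually_ge_atTop 0).mono fun _ ht =>
    (indicator_of_mem (mem_Ici.2 ht) (1 : ℝ → ℝ)).symm

theorem Causal.causalContinuous (hg : Causal g) (hgc : Continuous g) : CausalContinuous g :=
  ⟨hg, hgc.continuousOn⟩

namespace CausalContinuous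

theorem sub (hf : CausalContinuous f) (hg : CausalContinuous g) : CausalContinuous (f - g) :=
  ⟨hf.causal.sub hg.causal, hf.continuousOn.sub hg.continuousOn⟩

theorem causalLocallyIntegrable (hg : CausalContinuous g) : CausalLocallyIntegrable g :=
  hg.causal.causalLocallyIntegrable (hg.continuousOn.locallyIntegrableOn measurableSet_Ici)

theorem measurable (hg : CausalContinuous g) : Measurable g := by
  rw [← hg.causal.indicator_eq, ← piecewise_eq_indicator]
  exact hg.continuousOn.measurable_piecewise continuousOn_const measurableSet_Ici

theorem continuousAt (hg : CausalContinuous g) (ht : t ≠ 0) : ContinuousAt g t := by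
  rcases lt_or_gt_of_ne ht with h | h
  · refine continuousAt_const.congr (f := fun _ => (0 : ℝ)) ?_
    filter_upwards [Iio_mem_nhds h] with s hs using (hg.causal s hs).symm
  · exact hg.continuousOn.continuousAt (Ici_mem_nhds h)

theorem exists_forall_le_abs_le (hg : CausalContinuous g) (T : ℝ) : ∃ C, ∀ s ≤ T, |g s| ≤ C := by
  obtain ⟨C, hC⟩ := (isCompact_Icc (a := 0) (b := T)).exists_bound_of_continuousOn
    (hg.continuousOn.mono Icc_subset_Ici_self)
  refine ⟨max C 0, fun s hs => ?_⟩
  rcases lt_or_ge s 0 with h | h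
  · simp [hg.causal s h]
  · exact (hC s ⟨h, hs⟩).trans (le_max_left _ _)

theorem exists_forall_abs_le (hg : CausalContinuous g) {l : ℝ} (hl : Tendsto g atTop (𝓝 l)) :
    ∃ C, ∀ s, |g s| ≤ C := by
  obtain ⟨T, hT⟩ := eventually_atTop.1 (hl.abs.eventually (gt_mem_nhds (lt_add_one |l|)))
  obtain ⟨C, hC⟩ := hg.exists_forall_le_abs_le T
  refine ⟨max C (|l| + 1), fun s => ?_⟩
  rcases le_total s T with h | h
  · exact (hC s h).trans (le_max_left _ _)
  · exact (hT s h).le.trans (le_max_right _ _)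

end CausalContinuous

end Regularity

section Convolution

theorem norm_mul_comp_sub_le (hf : Causal f) (hg : Causal g) {C : ℝ}
    (hC : ∀ s ≤ T, |g s| ≤ C) (htT : t ≤ T) (s : ℝ) :
    ‖f s * g (t - s)‖ ≤ ‖indicator (Iic T) f s‖ * C := by
  have hC0 : 0 ≤ C := (abs_nonneg _).trans (hC T le_rfl)
  rcases lt_or_ge s 0 with hs | hs
  · simpa [hf s hs] using by positivity
  rcases lt_or_ge T s with hTs | hTs
  · simpa [hg (t - s) (by linarith)] using by positivity
  · rw [indicator_of_mem (mem_Iic.2 hTs), norm_mul]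
    exact mul_le_mul_of_nonneg_left (hC _ (by linarith)) (norm_nonneg _)

theorem CausalLocallyIntegrable.convolutionExists (hf : CausalLocallyIntegrable f μ)
    (hg : CausalContinuous g) : ConvolutionExists f g (mul ℝ ℝ) μ := fun t => by
  obtain ⟨C, hC⟩ := hg.exists_forall_le_abs_le t
  have hfi : Integrable (indicator (Iic t) f) μ :=
    (integrable_indicator_iff measurableSet_Iic).2 (hf.integrableOn_Iic t)
  exact (hfi.norm.mul_const C).mono'
    (hf.locallyIntegrable.aestronglyMeasurable.mul
      (hg.measurable.comp (measurable_const.sub measurable_id)).aestronglyMeasurable)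
    (Eventually.of_forall (norm_mul_comp_sub_le hf.causal hg.causal hC le_rfl))

theorem CausalLocallyIntegrable.continuous_convolution (hf : CausalLocallyIntegrable f)
    (hg : CausalContinuous g) : Continuous (f ⋆[mul ℝ ℝ] g) := by
  refine continuous_iff_continuousAt.2 fun t => ?_
  obtain ⟨C, hC⟩ := hg.exists_forall_le_abs_le (t + 1)
  have hfi : Integrable (indicator (Iic (t + 1)) f) :=
    (integrable_indicator_iff measurableSet_Iic).2 (hf.integrableOn_Iic (t + 1))
  refine continuousAt_of_dominated (bound := fun s => ‖indicator (Iic (t + 1)) f s‖ * C)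
    (Eventually.of_forall fun u => (hf.convolutionExists hg u).aestronglyMeasurable)
    ?_ (hfi.norm.mul_const C) ?_
  · filter_upwards [Iic_mem_nhds (lt_add_one t)] with u hu using
      Eventually.of_forall (norm_mul_comp_sub_le hf.causal hg.causal hC hu)
  · filter_upwards [compl_mem_ae_iff.2 (measure_singleton t)] with s hs
    exact continuousAt_const.mul (ContinuousAt.comp
      (hg.continuousAt (sub_ne_zero.2 (Ne.symm hs))) (continuousAt_id.sub continuousAt_const))

theorem CausalLocallyIntegrable.causalContinuous_convolution (hf : CausalLocallyIntegrable f)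
    (hg : CausalContinuous g) : CausalContinuous (f ⋆[mul ℝ ℝ] g) :=
  (hf.causal.convolution hg.causal).causalContinuous (hf.continuous_convolution hg)

theorem CausalLocallyIntegrable.continuous_primitive (hf : CausalLocallyIntegrable f) :
    Continuous (heaviside ⋆[mul ℝ ℝ] f) := by
  rw [convolution_mul_comm]
  exact hf.continuous_convolution causalContinuous_heaviside

theorem CausalLocallyIntegrable.causalContinuous_primitive (hf : CausalLocallyIntegrable f) :
    CausalContinuous (heaviside ⋆[mul ℝ ℝ] f) :=
  (causalContinuous_heaviside.causal.convolution hf.causal).causalContinuous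
    hf.continuous_primitive

theorem integrable_prod_mul_comp_sub {ν : Measure ℝ} [SFinite μ] [SFinite ν]
    (hf : CausalLocallyIntegrable f ν) (hk : CausalLocallyIntegrable k μ)
    (hg : CausalContinuous g) (t : ℝ) :
    Integrable (fun p : ℝ × ℝ => f p.1 * (k p.2 * g (t - p.1 - p.2))) (ν.prod μ) := by
  obtain ⟨C, hC⟩ := hg.exists_forall_le_abs_le t
  have hC0 : 0 ≤ C := (abs_nonneg _).trans (hC t le_rfl)
  have hfi : Integrable (indicator (Iic t) f) ν :=
    (integrable_indicator_iff measurableSet_Iic).2 (hf.integrableOn_Iic t)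
  have hki : Integrable (indicator (Iic t) k) μ :=
    (integrable_indicator_iff measurableSet_Iic).2 (hk.integrableOn_Iic t)
  refine (hfi.norm.mul_prod (hki.norm.mul_const C)).mono' ?_ (Eventually.of_forall fun p => ?_)
  · exact hf.locallyIntegrable.aestronglyMeasurable.comp_fst.mul
      (hk.locallyIntegrable.aestronglyMeasurable.comp_snd.mul
        (hg.measurable.comp (by fun_prop)).aestronglyMeasurable)
  · obtain ⟨u, v⟩ := p
    dsimp only
    rw [norm_mul]
    rcases lt_or_ge u 0 with hu | hu
    · simpa [hf.causal u hu] using by positivity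
    rcases lt_or_ge t u with htu | htu
    · have hv : k v * g (t - u - v) = 0 := by
        rcases lt_or_ge v 0 with hv | hv
        · simp [hk.causal v hv]
        · simp [hg.causal (t - u - v) (by linarith)]
      simpa [hv] using by positivity
    · rw [indicator_of_mem (mem_Iic.2 htu)]
      exact mul_le_mul_of_nonneg_left
        (norm_mul_comp_sub_le hk.causal hg.causal hC (by linarith) v) (norm_nonneg _)

theorem convolution_left_comm {ν : Measure ℝ} [SFinite μ] [SFinite ν]
    (hf : CausalLocallyIntegrable f ν) (hk : CausalLocallyIntegrable k μ)
    (hg : CausalContinuous g) :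
    f ⋆[mul ℝ ℝ, ν] (k ⋆[mul ℝ ℝ, μ] g) = k ⋆[mul ℝ ℝ, μ] (f ⋆[mul ℝ ℝ, ν] g) := by
  ext t
  calc ∫ u, f u * ∫ v, k v * g (t - u - v) ∂μ ∂ν
      = ∫ u, ∫ v, f u * (k v * g (t - u - v)) ∂μ ∂ν := by simp only [integral_const_mul]
    _ = ∫ v, ∫ u, f u * (k v * g (t - u - v)) ∂ν ∂μ :=
        integral_integral_swap (integrable_prod_mul_comp_sub hf hk hg t)
    _ = ∫ v, k v * ∫ u, f u * g (t - v - u) ∂ν ∂μ := by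
        simp only [← integral_const_mul, mul_left_comm (k _), sub_right_comm]

theorem tendsto_convolution (hk : Integrable k μ) (hg : CausalContinuous g) {l : ℝ}
    (hl : Tendsto g atTop (𝓝 l)) :
    Tendsto (k ⋆[mul ℝ ℝ, μ] g) atTop (𝓝 ((∫ s, k s ∂μ) * l)) := by
  obtain ⟨C, hC⟩ := hg.exists_forall_abs_le hl
  rw [← integral_mul_const]
  refine tendsto_integral_filter_of_dominated_convergence (fun s => ‖k s‖ * C)
    (Eventually.of_forall fun t => ?_) (Eventually.of_forall fun t => ae_of_all μ fun s => ?_)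
    (hk.norm.mul_const C) (ae_of_all μ fun s => ?_)
  · exact hk.aestronglyMeasurable.mul
      (hg.measurable.comp (measurable_const.sub measurable_id)).aestronglyMeasurable
  · exact (norm_mul_le _ _).trans (mul_le_mul_of_nonneg_left (hC _) (norm_nonneg _))
  · exact (hl.comp (tendsto_atTop_add_const_right _ (-s) tendsto_id)).const_mul (k s)

theorem tendsto_convolution_zero (hk : Integrable k μ) (hg : CausalContinuous g)
    (hl : Tendsto g atTop (𝓝 0)) : Tendsto (k ⋆[mul ℝ ℝ, μ] g) atTop (𝓝 0) := by
  simpa using tendsto_convolution hk hg hl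

end Convolution

section ForwardDifference

theorem heaviside_convolution_apply (g : ℝ → ℝ) (t : ℝ) :
    (heaviside ⋆[mul ℝ ℝ] g) t = ∫ s in Iic t, g s := by
  rw [convolution_mul_comm, ← integral_indicator measurableSet_Iic]
  refine integral_congr_ae (Eventually.of_forall fun s => ?_)
  by_cases hs : s ≤ t <;> simp [heaviside, indicator, hs]

theorem heaviside_convolution_indicator (g : ℝ → ℝ) (ht : 0 ≤ t) :
    (heaviside ⋆[mul ℝ ℝ] indicator (Ici 0) g) t = ∫ s in 0..t, g s := by
  rw [heaviside_convolution_apply, setIntegral_indicator measurableSet_Ici, inter_comm,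
    Ici_inter_Iic, integral_Icc_eq_integral_Ioc, intervalIntegral.integral_of_le ht]

theorem fwdDiff_heaviside_convolution (hg : CausalLocallyIntegrable g) (h t : ℝ) :
    Δ_[h] (heaviside ⋆[mul ℝ ℝ] g) t = ∫ s in t..t + h, g s := by
  rw [fwdDiff, heaviside_convolution_apply, heaviside_convolution_apply,
    intervalIntegral.integral_Iic_sub_Iic (hg.integrableOn_Iic _) (hg.integrableOn_Iic _)]

theorem fwdDiff_convolution (hkg : ConvolutionExists k g (mul ℝ ℝ) μ) (h : ℝ) :
    Δ_[h] (k ⋆[mul ℝ ℝ, μ] g) = k ⋆[mul ℝ ℝ, μ] Δ_[h] g := by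
  ext t
  refine (integral_sub (hkg (t + h)) (hkg t)).symm.trans ?_
  simp only [convolution_mul, ContinuousLinearMap.mul_apply', fwdDiff, mul_sub,
    add_sub_right_comm]

theorem continuous_fwdDiff (hg : Continuous g) (h : ℝ) : Continuous (Δ_[h] g) :=
  (hg.comp (continuous_add_const h)).sub hg

theorem Causal.fwdDiff_neg (hg : Causal g) {θ : ℝ} (hθ : 0 ≤ θ) : Causal (Δ_[-θ] g) :=
  fun t ht => by simp [fwdDiff, hg t ht, hg (t + -θ) (by linarith)]

theorem tendsto_fwdDiff_zero {l : ℝ} (hg : Tendsto g atTop (𝓝 l)) (h : ℝ) :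
    Tendsto (Δ_[h] g) atTop (𝓝 0) := by
  rw [← sub_self l]
  exact (hg.comp (tendsto_atTop_add_const_right _ h tendsto_id)).sub hg

theorem tendsto_fwdDiff_neg_zero {h : ℝ} (hg : Tendsto (Δ_[h] g) atTop (𝓝 0)) :
    Tendsto (Δ_[-h] g) atTop (𝓝 0) := by
  have hshift := (hg.comp (tendsto_atTop_add_const_right _ (-h) tendsto_id)).neg
  rw [neg_zero] at hshift
  exact hshift.congr fun t => by simp [fwdDiff]

theorem fwdDiff_neg_heaviside {θ : ℝ} (hθ : 0 ≤ θ) :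
    Δ_[-θ] heaviside = -indicator (Ico 0 θ) 1 := by
  ext t
  simp only [fwdDiff, heaviside, indicator, Pi.neg_apply, mem_Ici, mem_Ico, Pi.one_apply]
  grind

theorem integrable_fwdDiff_neg_heaviside {θ : ℝ} (hθ : 0 ≤ θ) :
    Integrable (Δ_[-θ] heaviside) := by
  rw [fwdDiff_neg_heaviside hθ]
  exact ((integrable_indicator_iff measurableSet_Ico).2 (integrableOn_const (by simp))).neg

end ForwardDifference

section Resolvent

/-- The differential resolvent `r` of the measure `k μ` carried by `[0, ∞)`, when it is integrable.
The equation `r' = (k μ) * r`, `r 0 = 1` is recorded in its integrated form. -/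
structure IsIntegrableResolvent (μ : Measure ℝ) (k r : ℝ → ℝ) : Prop where
  causal_kernel : Causal k
  integrable_kernel : Integrable k μ
  causalContinuous : CausalContinuous r
  integrable : Integrable r
  eq_add : r = heaviside + k ⋆[mul ℝ ℝ, μ] (heaviside ⋆[mul ℝ ℝ] r)

namespace IsIntegrableResolvent

theorem causalLocallyIntegrable_kernel (hr : IsIntegrableResolvent μ k r) :
    CausalLocallyIntegrable k μ :=
  ⟨hr.causal_kernel, fun _ => hr.integrable_kernel.integrableOn⟩

theorem causalContinuous_primitive (hr : IsIntegrableResolvent μ k r) :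
    CausalContinuous (heaviside ⋆[mul ℝ ℝ] r) :=
  hr.causalContinuous.causalLocallyIntegrable.causalContinuous_primitive

theorem tendsto_primitive (hr : IsIntegrableResolvent μ k r) :
    Tendsto (heaviside ⋆[mul ℝ ℝ] r) atTop (𝓝 (∫ s, r s)) := by
  rw [convolution_mul_comm, ← mul_one (∫ s, r s)]
  exact tendsto_convolution hr.integrable causalContinuous_heaviside tendsto_heaviside

theorem tendsto_zero (hr : IsIntegrableResolvent μ k r) : Tendsto r atTop (𝓝 0) := by
  have hlim := (tendsto_heaviside.add (tendsto_convolution hr.integrable_kernel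
    hr.causalContinuous_primitive hr.tendsto_primitive)).congr fun t => (congrFun hr.eq_add t).symm
  have hvol : ∀ s ∈ (atTop : Filter ℝ), volume s = ⊤ := fun s hs => by
    obtain ⟨b, hb⟩ := mem_atTop_sets.1 hs
    exact measure_mono_top hb Real.volume_Ici
  have hl := IntegrableAtFilter.eq_zero_of_tendsto (hr.integrable.integrableAtFilter _) hvol hlim
  rwa [hl] at hlim

variable [SFinite μ]

theorem convolution_eq_add (hr : IsIntegrableResolvent μ k r) (hf : CausalLocallyIntegrable f) :
    f ⋆[mul ℝ ℝ] r = heaviside ⋆[mul ℝ ℝ] f +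
      k ⋆[mul ℝ ℝ, μ] (f ⋆[mul ℝ ℝ] (heaviside ⋆[mul ℝ ℝ] r)) := by
  have hK : CausalContinuous (k ⋆[mul ℝ ℝ, μ] (heaviside ⋆[mul ℝ ℝ] r)) :=
    eq_sub_of_add_eq' hr.eq_add.symm ▸ hr.causalContinuous.sub causalContinuous_heaviside
  calc f ⋆[mul ℝ ℝ] r
      = f ⋆[mul ℝ ℝ] (heaviside + k ⋆[mul ℝ ℝ, μ] (heaviside ⋆[mul ℝ ℝ] r)) := by
        rw [← hr.eq_add]
    _ = f ⋆[mul ℝ ℝ] heaviside + f ⋆[mul ℝ ℝ] (k ⋆[mul ℝ ℝ, μ] (heaviside ⋆[mul ℝ ℝ] r)) :=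
        (hf.convolutionExists causalContinuous_heaviside).distrib_add (hf.convolutionExists hK)
    _ = _ := by
        rw [convolution_mul_comm f heaviside, convolution_left_comm hf
          hr.causalLocallyIntegrable_kernel hr.causalContinuous_primitive]

theorem convolution_eq_add_primitive (hr : IsIntegrableResolvent μ k r)
    (hf : CausalLocallyIntegrable f) :
    f ⋆[mul ℝ ℝ] r = heaviside ⋆[mul ℝ ℝ] f +
      k ⋆[mul ℝ ℝ, μ] (heaviside ⋆[mul ℝ ℝ] (f ⋆[mul ℝ ℝ] r)) := by
  rw [← convolution_left_comm hf causalContinuous_heaviside.causalLocallyIntegrable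
    hr.causalContinuous, ← hr.convolution_eq_add hf]

theorem convolution_eq_add_resolvent (hr : IsIntegrableResolvent μ k r)
    (hf : CausalLocallyIntegrable f) :
    f ⋆[mul ℝ ℝ] r = heaviside ⋆[mul ℝ ℝ] f +
      k ⋆[mul ℝ ℝ, μ] (r ⋆[mul ℝ ℝ] (heaviside ⋆[mul ℝ ℝ] f)) := by
  rw [convolution_mul_comm heaviside f, ← convolution_left_comm hf
    hr.causalContinuous.causalLocallyIntegrable causalContinuous_heaviside,
    convolution_mul_comm r heaviside, convolution_mul_comm f heaviside, ← hr.convolution_eq_add hf]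

theorem tendsto_fwdDiff_primitive (hr : IsIntegrableResolvent μ k r)
    (hf : CausalLocallyIntegrable f) (hx : Tendsto (f ⋆[mul ℝ ℝ] r) atTop (𝓝 0)) {θ : ℝ}
    (hθ : 0 ≤ θ) : Tendsto (Δ_[θ] (heaviside ⋆[mul ℝ ℝ] f)) atTop (𝓝 0) := by
  set x := f ⋆[mul ℝ ℝ] r
  have hxc : CausalContinuous x := hf.causalContinuous_convolution hr.causalContinuous
  have hX : CausalContinuous (heaviside ⋆[mul ℝ ℝ] x) :=
    hxc.causalLocallyIntegrable.causalContinuous_primitive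
  have hΔX : CausalContinuous (Δ_[-θ] (heaviside ⋆[mul ℝ ℝ] x)) :=
    (hX.causal.fwdDiff_neg hθ).causalContinuous
      (continuous_fwdDiff hxc.causalLocallyIntegrable.continuous_primitive _)
  have hΔX_lim : Tendsto (Δ_[-θ] (heaviside ⋆[mul ℝ ℝ] x)) atTop (𝓝 0) := by
    rw [convolution_mul_comm, fwdDiff_convolution
      (hxc.causalLocallyIntegrable.convolutionExists causalContinuous_heaviside),
      convolution_mul_comm]
    exact tendsto_convolution_zero (integrable_fwdDiff_neg_heaviside hθ) hxc hx
  have hdiff : Δ_[-θ] x = Δ_[-θ] (heaviside ⋆[mul ℝ ℝ] f) +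
      k ⋆[mul ℝ ℝ, μ] Δ_[-θ] (heaviside ⋆[mul ℝ ℝ] x) := by
    rw [← fwdDiff_convolution (hr.causalLocallyIntegrable_kernel.convolutionExists hX),
      ← fwdDiff_add, ← hr.convolution_eq_add_primitive hf]
  have hlim := (tendsto_fwdDiff_zero hx (-θ)).sub
    (tendsto_convolution_zero hr.integrable_kernel hΔX hΔX_lim)
  rw [sub_zero] at hlim
  rw [← neg_neg θ]
  refine tendsto_fwdDiff_neg_zero (hlim.congr fun t => ?_)
  rw [hdiff, Pi.add_apply, add_sub_cancel_right]

theorem tendsto_convolution_of_tendsto_primitive (hr : IsIntegrableResolvent μ k r)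
    (hf : CausalLocallyIntegrable f) (hF : Tendsto (heaviside ⋆[mul ℝ ℝ] f) atTop (𝓝 0)) :
    Tendsto (f ⋆[mul ℝ ℝ] r) atTop (𝓝 0) := by
  have hFc := hf.causalContinuous_primitive
  have hrF := hr.causalContinuous.causalLocallyIntegrable.causalContinuous_convolution hFc
  have hlim := hF.add (tendsto_convolution_zero hr.integrable_kernel hrF
    (tendsto_convolution_zero hr.integrable hFc hF))
  rw [add_zero] at hlim
  rwa [hr.convolution_eq_add_resolvent hf]

end IsIntegrableResolvent

end Resolvent

section Baire

theorem exists_isOpen_eventually_forall_norm_le {ι X E : Type*} {l : Filter ι}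
    [l.IsCountablyGenerated] [TopologicalSpace X] [BaireSpace X] [SeminormedAddCommGroup E]
    {φ : ι → X → E} (hφ : ∀ i, Continuous (φ i)) {s : Set X} (hs : IsOpen s) (hne : s.Nonempty)
    {C : ℝ} (hC : ∀ x ∈ s, ∀ᶠ i in l, ‖φ i x‖ ≤ C) :
    ∃ U ⊆ s, IsOpen U ∧ U.Nonempty ∧ ∀ᶠ i in l, ∀ x ∈ U, ‖φ i x‖ ≤ C := by
  obtain ⟨B, hB⟩ := l.exists_antitone_basis
  let A : ℕ → Set X := fun n => ⋂ i ∈ B n, {x | ‖φ i x‖ ≤ C}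
  have hclosed (n : ℕ) : IsClosed (A n ∪ sᶜ) :=
    (isClosed_biInter fun i _ => isClosed_le (hφ i).norm continuous_const).union hs.isClosed_compl
  have hcover : ⋃ n, (A n ∪ sᶜ) = univ := by
    refine eq_univ_of_forall fun x => mem_iUnion.2 ?_
    by_cases hx : x ∈ s
    · obtain ⟨n, hn⟩ := hB.eventually_iff.1 (hC x hx)
      exact ⟨n, Or.inl (mem_iInter₂.2 fun i hi => hn.2 hi)⟩
    · exact ⟨0, Or.inr hx⟩
  obtain ⟨x, hxs, hx⟩ :=
    (dense_iUnion_interior_of_closed hclosed hcover).inter_open_nonempty s hs hne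
  obtain ⟨n, hxn⟩ := mem_iUnion.1 hx
  refine ⟨s ∩ interior (A n ∪ sᶜ), inter_subset_left, hs.inter isOpen_interior, ⟨x, hxs, hxn⟩, ?_⟩
  filter_upwards [hB.mem n] with i hi y hy
  exact (interior_subset hy.2).elim (fun hyA => mem_iInter₂.1 hyA i hi) (absurd hy.1)

theorem exists_eventually_forall_Icc_abs_sub_le {F : ℝ → ℝ} (hF : Continuous F)
    (hlim : ∀ θ ∈ Ioc (0 : ℝ) 1, Tendsto (Δ_[θ] F) atTop (𝓝 0)) :
    ∃ c ∈ Ioc (0 : ℝ) 1, ∀ᶠ t in atTop, ∀ s ∈ Icc (t - c) t, |F t - F s| ≤ 2 := by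
  obtain ⟨U, hUsub, hU, ⟨b, hb⟩, hbound⟩ := exists_isOpen_eventually_forall_norm_le
    (l := atTop) (φ := fun t θ => Δ_[θ] F t) (s := Ioo (0 : ℝ) 1) (C := 1)
    (fun t => (hF.comp (continuous_const_add t)).sub continuous_const) isOpen_Ioo
    (nonempty_Ioo.2 one_pos) fun θ hθ =>
      ((hlim θ (Ioo_subset_Ioc_self hθ)).norm.eventually (gt_mem_nhds (by simp))).mono
        fun _ h => le_of_lt h
  obtain ⟨T, hT⟩ := eventually_atTop.1 hbound
  obtain ⟨d, hbd, hd⟩ := (nhdsGE_basis_Icc (a := b)).mem_iff.1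
    (mem_nhdsWithin_of_mem_nhds (hU.mem_nhds hb))
  have hb_mem := hUsub hb
  have hd_mem := hUsub (hd ⟨le_of_lt hbd, le_rfl⟩)
  refine ⟨d - b, ⟨sub_pos.2 hbd, by linarith [hb_mem.1, hd_mem.2]⟩, ?_⟩
  filter_upwards [eventually_ge_atTop (T + (d - b))] with t ht s hs
  -- The shift of `t` by `b` and the shift of `s` by `b + (t - s)` have the same end point.
  have ht_shift : |F (t + b) - F t| ≤ 1 := hT t (by linarith [hs.1, hs.2]) b hb
  have hs_shift : |F (t + b) - F s| ≤ 1 := by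
    rw [show t + b = s + (b + (t - s)) by ring]
    exact hT s (by linarith [hs.1]) _ (hd ⟨by linarith [hs.2], by linarith [hs.1]⟩)
  calc |F t - F s| = |(F (t + b) - F s) - (F (t + b) - F t)| := by ring_nf
    _ ≤ |F (t + b) - F s| + |F (t + b) - F t| := abs_sub _ _
    _ ≤ 2 := by linarith

theorem tendsto_sub_intervalAverage {F : ℝ → ℝ} (hF : Continuous F) {c C : ℝ} (hc : 0 < c)
    (hlim : ∀ θ ∈ Ioc 0 c, Tendsto (Δ_[θ] F) atTop (𝓝 0))
    (hC : ∀ᶠ t in atTop, ∀ s ∈ Icc (t - c) t, |F t - F s| ≤ C) :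
    Tendsto (fun t => F t - c⁻¹ * ∫ s in t - c..t, F s) atTop (𝓝 0) := by
  have hint : Tendsto (fun t => ∫ θ in 0..c, (F t - F (t - θ))) atTop
      (𝓝 (∫ _ in 0..c, (0 : ℝ))) := by
    refine intervalIntegral.tendsto_integral_filter_of_dominated_convergence (fun _ => C)
      (Eventually.of_forall fun t => (by fun_prop : Continuous _).aestronglyMeasurable) ?_
      intervalIntegrable_const (Eventually.of_forall fun θ hθ => ?_)
    · filter_upwards [hC] with t ht
      refine Eventually.of_forall fun θ hθ => ?_
      rw [uIoc_of_le hc.le] at hθ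
      exact ht _ ⟨by linarith [hθ.2], by linarith [hθ.1]⟩
    · rw [uIoc_of_le hc.le] at hθ
      have := (tendsto_fwdDiff_neg_zero (hlim θ hθ)).neg
      simpa [fwdDiff, sub_eq_add_neg] using this
  have hscaled := hint.const_mul c⁻¹
  rw [intervalIntegral.integral_zero, mul_zero] at hscaled
  refine hscaled.congr fun t => ?_
  rw [intervalIntegral.integral_sub intervalIntegrable_const
    (Continuous.intervalIntegrable (by fun_prop) _ _), intervalIntegral.integral_comp_sub_left,
    intervalIntegral.integral_const, sub_zero, sub_zero, smul_eq_mul, mul_sub,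
    inv_mul_cancel_left₀ hc.ne']

end Baire

section Equivalence

theorem CausalLocallyIntegrable.heaviside_convolution_add_smul_fwdDiff_neg
    (hf : CausalLocallyIntegrable f) {c : ℝ} (hc : 0 ≤ c) (a t : ℝ) :
    (heaviside ⋆[mul ℝ ℝ] (f + a • Δ_[-c] (heaviside ⋆[mul ℝ ℝ] f))) t =
      (heaviside ⋆[mul ℝ ℝ] f) t - a * ∫ s in t - c..t, (heaviside ⋆[mul ℝ ℝ] f) s := by
  set F := heaviside ⋆[mul ℝ ℝ] f
  have hF : CausalContinuous F := hf.causalContinuous_primitive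
  have hH := causalContinuous_heaviside
  have hp : CausalContinuous (a • Δ_[-c] F) :=
    ((hF.causal.fwdDiff_neg hc).const_smul a).causalContinuous
      ((continuous_fwdDiff hf.continuous_primitive _).const_smul a)
  have hΔ : (heaviside ⋆[mul ℝ ℝ] Δ_[-c] F) t = -∫ s in t - c..t, F s := by
    rw [← fwdDiff_convolution (hH.causalLocallyIntegrable.convolutionExists hF),
      fwdDiff_heaviside_convolution hF.causalLocallyIntegrable, ← sub_eq_add_neg,
      intervalIntegral.integral_symm]
  rw [convolution_mul_comm, (hf.convolutionExists hH).add_distrib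
    (hp.causalLocallyIntegrable.convolutionExists hH), convolution_mul_comm f,
    convolution_mul_comm _ heaviside, convolution_smul, Pi.add_apply, Pi.smul_apply, hΔ,
    smul_neg, smul_eq_mul, ← sub_eq_add_neg]

theorem IsIntegrableResolvent.tendsto_convolution_of_tendsto_fwdDiff [SFinite μ]
    (hr : IsIntegrableResolvent μ k r) (hf : CausalLocallyIntegrable f)
    (hlim : ∀ θ ∈ Ioc (0 : ℝ) 1, Tendsto (Δ_[θ] (heaviside ⋆[mul ℝ ℝ] f)) atTop (𝓝 0)) :
    Tendsto (f ⋆[mul ℝ ℝ] r) atTop (𝓝 0) := by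
  have hF := hf.continuous_primitive
  obtain ⟨c, hc, hbound⟩ := exists_eventually_forall_Icc_abs_sub_le hF hlim
  set p := c⁻¹ • Δ_[-c] (heaviside ⋆[mul ℝ ℝ] f)
  have hp : CausalContinuous p :=
    ((hf.causalContinuous_primitive.causal.fwdDiff_neg hc.1.le).const_smul _).causalContinuous
      ((continuous_fwdDiff hF _).const_smul _)
  have hp_lim : Tendsto p atTop (𝓝 0) := by
    rw [← smul_zero c⁻¹]
    exact (tendsto_fwdDiff_neg_zero (hlim c hc)).const_smul c⁻¹
  have hpr_lim : Tendsto (p ⋆[mul ℝ ℝ] r) atTop (𝓝 0) := by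
    rw [convolution_mul_comm]
    exact tendsto_convolution_zero hr.integrable hp hp_lim
  have hprimitive_lim : Tendsto (heaviside ⋆[mul ℝ ℝ] (f + p)) atTop (𝓝 0) :=
    (tendsto_sub_intervalAverage hF hc.1 (fun θ hθ => hlim θ ⟨hθ.1, hθ.2.trans hc.2⟩)
      hbound).congr fun t => (hf.heaviside_convolution_add_smul_fwdDiff_neg hc.1.le _ t).symm
  have hsum_lim : Tendsto ((f + p) ⋆[mul ℝ ℝ] r) atTop (𝓝 0) :=
    hr.tendsto_convolution_of_tendsto_primitive (hf.add hp.causalLocallyIntegrable) hprimitive_lim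
  have hsplit : f ⋆[mul ℝ ℝ] r = (f + p) ⋆[mul ℝ ℝ] r - p ⋆[mul ℝ ℝ] r := by
    rw [(hf.convolutionExists hr.causalContinuous).add_distrib
      (hp.causalLocallyIntegrable.convolutionExists hr.causalContinuous), add_sub_cancel_right]
  rw [hsplit, ← sub_zero (0 : ℝ)]
  exact hsum_lim.sub hpr_lim

theorem IsIntegrableResolvent.tendsto_convolution_iff [SFinite μ]
    (hr : IsIntegrableResolvent μ k r) (hf : CausalLocallyIntegrable f) :
    Tendsto (f ⋆[mul ℝ ℝ] r) atTop (𝓝 0) ↔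
      ∀ θ ∈ Ioc (0 : ℝ) 1, Tendsto (Δ_[θ] (heaviside ⋆[mul ℝ ℝ] f)) atTop (𝓝 0) :=
  ⟨fun h _ hθ => hr.tendsto_fwdDiff_primitive hf h hθ.1.le,
    hr.tendsto_convolution_of_tendsto_fwdDiff hf⟩

end Equivalence

section SignedMeasure

theorem exists_signedSetIntegral_eq (ν : SignedMeasure ℝ) :
    ∃ σ : ℝ → ℝ, Measurable σ ∧ (∀ s, |σ s| ≤ 1) ∧ ∀ (g : ℝ → ℝ) (A : Set ℝ),
      IntegrableOn g A ν.totalVariation →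
        signedSetIntegral ν g A = ∫ s in A, σ s * g s ∂ν.totalVariation := by
  classical
  obtain ⟨S, hS, hpos, hneg⟩ := ν.toJordanDecomposition.mutuallySingular
  set σ : ℝ → ℝ := S.piecewise (fun _ => -1) fun _ => 1
  have hσ : Measurable σ := measurable_const.piecewise hS measurable_const
  have hσ_le (s : ℝ) : |σ s| ≤ 1 := by by_cases hs : s ∈ S <;> simp [σ, hs]
  refine ⟨σ, hσ, hσ_le, fun g A hg => ?_⟩
  have hσg : IntegrableOn (fun s => σ s * g s) A ν.totalVariation :=
    hg.bdd_mul hσ.aestronglyMeasurable (ae_of_all _ hσ_le)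
  rw [SignedMeasure.totalVariation, IntegrableOn, Measure.restrict_add] at hσg
  rw [SignedMeasure.totalVariation, Measure.restrict_add,
    integral_add_measure (hσg.mono_measure (Measure.le_add_right le_rfl))
      (hσg.mono_measure (Measure.le_add_left le_rfl)), signedSetIntegral, sub_eq_add_neg,
    ← integral_neg]
  congr 1
  · refine integral_congr_ae (ae_restrict_of_ae ?_)
    filter_upwards [measure_eq_zero_iff_ae_notMem.1 hpos] with s hs
    simp [σ, hs]
  · refine integral_congr_ae (ae_restrict_of_ae ?_)
    filter_upwards [measure_eq_zero_iff_ae_notMem.1 hneg] with s hs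
    simp [σ, not_not.1 hs]

theorem continuousOn_of_eq_add_integral {g g' : ℝ → ℝ} {c : ℝ}
    (hg' : LocallyIntegrableOn g' (Ici 0)) (hg : ∀ t ≥ (0 : ℝ), g t = c + ∫ s in 0..t, g' s) :
    ContinuousOn g (Ici 0) :=
  ((continuous_const (y := c)).add
    (causalLocallyIntegrable_indicator hg').continuous_primitive).continuousOn.congr
      fun t ht => by
        rw [hg t ht, Pi.add_apply, heaviside_convolution_indicator g' ht]

theorem isIntegrableResolvent_of_ae_eq [SFinite μ] {r' : ℝ → ℝ} (hk : Causal k)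
    (hki : Integrable k μ) (hr' : LocallyIntegrableOn r' (Ici 0))
    (hFTC : ∀ t ≥ (0 : ℝ), r t = 1 + ∫ s in 0..t, r' s)
    (hres : ∀ᵐ t ∂volume.restrict (Ioi (0 : ℝ)), r' t = (k ⋆[mul ℝ ℝ, μ] indicator (Ici 0) r) t)
    (hri : IntegrableOn r (Ici 0)) : IsIntegrableResolvent μ k (indicator (Ici 0) r) where
  causal_kernel := hk
  integrable_kernel := hki
  causalContinuous := causalContinuous_indicator (continuousOn_of_eq_add_integral hr' hFTC)
  integrable := (integrable_indicator_iff measurableSet_Ici).2 hri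
  eq_add := by
    have hrc := causalContinuous_indicator (continuousOn_of_eq_add_integral hr' hFTC)
    have hH := causalContinuous_heaviside
    rw [← convolution_left_comm hH.causalLocallyIntegrable ⟨hk, fun _ => hki.integrableOn⟩ hrc]
    have hkr := hk.convolution (μ := μ) hrc.causal
    ext t
    rcases lt_or_ge t 0 with ht | ht
    · rw [hrc.causal t ht, hH.causal.add (hH.causal.convolution hkr) t ht]
    have hae : ∀ᵐ s, s ∈ uIoc 0 t → r' s = (k ⋆[mul ℝ ℝ, μ] indicator (Ici 0) r) s := by
      filter_upwards [(ae_restrict_iff' measurableSet_Ioi).1 hres] with s hs hst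
      exact hs (by rw [uIoc_of_le ht] at hst; exact hst.1)
    rw [indicator_of_mem (mem_Ici.2 ht), hFTC t ht, intervalIntegral.integral_congr_ae hae,
      ← heaviside_convolution_indicator _ ht, hkr.indicator_eq, Pi.add_apply, heaviside,
      indicator_of_mem (mem_Ici.2 ht), Pi.one_apply]

theorem exists_isIntegrableResolvent {ν : SignedMeasure ℝ} {r' : ℝ → ℝ}
    (hr' : LocallyIntegrableOn r' (Ici 0)) (hFTC : ∀ t ≥ (0 : ℝ), r t = 1 + ∫ s in 0..t, r' s)
    (hres : ∀ᵐ t ∂volume.restrict (Ioi (0 : ℝ)),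
      r' t = signedSetIntegral ν (fun s => r (t - s)) (Icc 0 t))
    (hri : IntegrableOn r (Ici 0)) :
    ∃ k, IsIntegrableResolvent ν.totalVariation k (indicator (Ici 0) r) := by
  obtain ⟨σ, hσ, hσ_le, hσ_eq⟩ := exists_signedSetIntegral_eq ν
  have hσi : Integrable σ ν.totalVariation :=
    .of_bound hσ.aestronglyMeasurable 1 (ae_of_all _ hσ_le)
  refine ⟨indicator (Ici 0) σ, isIntegrableResolvent_of_ae_eq (causal_indicator σ)
    (hσi.indicator measurableSet_Ici) hr' hFTC ?_ hri⟩
  filter_upwards [hres] with t ht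
  have hr_shift : ContinuousOn (fun s => r (t - s)) (Icc 0 t) :=
    (continuousOn_of_eq_add_integral hr' hFTC).comp (by fun_prop) fun s hs => sub_nonneg.2 hs.2
  rw [ht, hσ_eq _ _ (hr_shift.integrableOn_compact isCompact_Icc),
    (causal_indicator σ).convolution_apply (causal_indicator r)]
  refine setIntegral_congr_fun measurableSet_Icc fun s hs => ?_
  simp only [indicator_of_mem (mem_Ici.2 hs.1), indicator_of_mem (mem_Ici.2 (sub_nonneg.2 hs.2))]

end SignedMeasure

section HalfLine

theorem indicator_convolution_indicator (f g : ℝ → ℝ) (ht : 0 ≤ t) :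
    (indicator (Ici 0) f ⋆[mul ℝ ℝ] indicator (Ici 0) g) t = ∫ s in 0..t, g (t - s) * f s := by
  rw [(causal_indicator f).convolution_apply (causal_indicator g),
    intervalIntegral.integral_of_le ht, ← integral_Icc_eq_integral_Ioc]
  refine setIntegral_congr_fun measurableSet_Icc fun s hs => ?_
  simp only [indicator_of_mem (mem_Ici.2 hs.1), indicator_of_mem (mem_Ici.2 (sub_nonneg.2 hs.2)),
    mul_comm]

theorem fwdDiff_primitive_indicator (hf : LocallyIntegrableOn f (Ici 0)) {θ : ℝ} (hθ : 0 ≤ θ)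
    (ht : 0 ≤ t) :
    Δ_[θ] (heaviside ⋆[mul ℝ ℝ] indicator (Ici 0) f) t = ∫ s in t..t + θ, f s := by
  rw [fwdDiff_heaviside_convolution (causalLocallyIntegrable_indicator hf)]
  refine intervalIntegral.integral_congr fun s hs => ?_
  rw [uIcc_of_le (by linarith)] at hs
  exact indicator_of_mem (mem_Ici.2 (ht.trans hs.1)) f

theorem bounded_continuousOn_tendsto_iff_of_eqOn {g h : ℝ → ℝ} (hh : ContinuousOn h (Ici 0))
    (hgh : EqOn g h (Ici 0)) :
    ((∃ M, ∀ t ≥ (0 : ℝ), |g t| ≤ M) ∧ ContinuousOn g (Ici 0) ∧ Tendsto g atTop (𝓝 0)) ↔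
      Tendsto h atTop (𝓝 0) := by
  have hev : g =ᶠ[atTop] h := (eventually_ge_atTop 0).mono hgh
  refine ⟨fun hg => hg.2.2.congr' hev, fun hlim => ⟨?_, hh.congr hgh, hlim.congr' hev.symm⟩⟩
  obtain ⟨M, hM⟩ := (causalContinuous_indicator hh).exists_forall_abs_le <|
    hlim.congr' ((eventually_ge_atTop 0).mono fun t ht => (indicator_of_mem (mem_Ici.2 ht) h).symm)
  exact ⟨M, fun t ht => by simpa [hgh (mem_Ici.2 ht), ht] using hM t⟩

theorem forall_tendsto_mul_const_add_iff (hr : Tendsto r atTop (𝓝 0)) :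
    (∀ ξ : ℝ, Tendsto (fun t => r t * ξ + x t) atTop (𝓝 0)) ↔ Tendsto x atTop (𝓝 0) :=
  ⟨fun h => by simpa using h 0, fun h ξ => by simpa using (hr.mul_const ξ).add h⟩

end HalfLine

end Volterra

/-- the `BC₀` characterisation: let `r` be the differential resolvent of
the finite signed Borel measure `ν` on `[0,∞)`, with `r ∈ L¹([0,∞))`, and for `ξ ∈ ℝ` let
`x(·;ξ)` denote the solution `x(t;ξ) = r(t) ξ + ∫_0^t r(t-s) f(s) ds` of the perturbed
equation. Then: (A) for every `ξ`, `x(·;ξ)` is bounded on `[0,∞)`, continuous on `[0,∞)`,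
and tends to `0` at `∞`, if and only if (B) for each `θ ∈ (0,1]` the interval average
`t ↦ ∫_t^{t+θ} f(s) ds` is bounded on `[0,∞)`, continuous on `[0,∞)`, and tends to `0`
at `∞`. -/
theorem solution_BC0_iff_interval_average_BC0
    (ν : MeasureTheory.SignedMeasure ℝ)
    (hν : ν.restrict (Iio 0) = 0)
    (f : ℝ → ℝ)
    (hf : LocallyIntegrableOn f (Ici 0))
    (r r' : ℝ → ℝ)
    (hr'loc : LocallyIntegrableOn r' (Ici 0))
    (hr0 : r 0 = 1)
    (hFTC : ∀ t ≥ (0:ℝ), r t = 1 + ∫ s in (0:ℝ)..t, r' s)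
    (hres : ∀ᵐ t ∂(volume.restrict (Ioi (0:ℝ))),
      r' t = signedSetIntegral ν (fun s => r (t - s)) (Icc 0 t))
    (hrL1 : IntegrableOn r (Ici 0)) :
    (∀ ξ : ℝ,
        (∃ M : ℝ, ∀ t ≥ (0:ℝ), |r t * ξ + ∫ s in (0:ℝ)..t, r (t - s) * f s| ≤ M) ∧
        ContinuousOn (fun t => r t * ξ + ∫ s in (0:ℝ)..t, r (t - s) * f s) (Ici 0) ∧
        Tendsto (fun t => r t * ξ + ∫ s in (0:ℝ)..t, r (t - s) * f s) atTop (nhds 0))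
      ↔ ∀ θ ∈ Ioc (0:ℝ) 1,
          (∃ M : ℝ, ∀ t ≥ (0:ℝ), |∫ s in t..(t + θ), f s| ≤ M) ∧
          ContinuousOn (fun t => ∫ s in t..(t + θ), f s) (Ici 0) ∧
          Tendsto (fun t => ∫ s in t..(t + θ), f s) atTop (nhds 0) := by
  obtain ⟨k, hr⟩ := Volterra.exists_isIntegrableResolvent hr'loc hFTC hres hrL1
  have hf' := Volterra.causalLocallyIntegrable_indicator hf
  have hx := hf'.continuous_convolution hr.causalContinuous
  have hsol (ξ : ℝ) := Volterra.bounded_continuousOn_tendsto_iff_of_eqOn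
    ((hr.causalContinuous.continuousOn.mul_const ξ).add hx.continuousOn)
    (g := fun t => r t * ξ + ∫ s in (0 : ℝ)..t, r (t - s) * f s) fun t ht => by
      simp [Volterra.indicator_convolution_indicator f r ht, mem_Ici.1 ht]
  have havg (θ : ℝ) (hθ : θ ∈ Ioc (0 : ℝ) 1) := Volterra.bounded_continuousOn_tendsto_iff_of_eqOn
    (Volterra.continuous_fwdDiff hf'.continuous_primitive θ).continuousOn
    fun t ht => (Volterra.fwdDiff_primitive_indicator hf hθ.1.le ht).symm
  exact (forall_congr' hsol).trans <|
    (Volterra.forall_tendsto_mul_const_add_iff hr.tendsto_zero).trans <|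
    (hr.tendsto_convolution_iff hf').trans (forall₂_congr havg).symm
end

section
/- Let 0 < α < β and define f(t) = e^{αt} sin(e^{βt}) for t ≥ 0. Then for every θ > 0 there exist constants C > 0 and T ≥ 0 such that |∫_t^{t+θ} f(s) ds| ≤ C e^{−(β−α)t} for all t ≥ T; in particular, for every p ≥ 1 and every θ > 0 the function t ↦ ∫_t^{t+θ} f(s) ds belongs to L^p([0,∞)). -/
open MeasureTheory Set Filter

/-!
Write `e^{αs} sin (e^{βs}) = u(s) v'(s)` with amplitude `u(s) = e^{-(β-α)s} / β` and
`v(s) = -cos (e^{βs})`. Since `u` is nonnegative and decreasing and `|v| ≤ 1`, integration by parts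
bounds the integral over any interval starting at `t` by `2 u(t)`, whatever its length. The averages
are continuous in `t`, so this exponential decay puts them in every `L^p`.
-/

theorem intervalIntegrable_deriv_of_nonpos {u u' : ℝ → ℝ} {a b : ℝ}
    (hu : ContinuousOn u (uIcc a b))
    (hderiv : ∀ x ∈ Ioo (min a b) (max a b), HasDerivAt u (u' x) x)
    (hu' : ∀ x ∈ Ioo (min a b) (max a b), u' x ≤ 0) :
    IntervalIntegrable u' volume a b := by
  simpa only [neg_neg] using (intervalIntegral.intervalIntegrable_deriv_of_nonneg (g' := -u')
    hu.neg (fun x hx ↦ (hderiv x hx).neg) (fun x hx ↦ neg_nonneg.mpr (hu' x hx))).neg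

section DerivNonpos

variable {E : Type*} [NormedAddCommGroup E] [NormedSpace ℝ E]
  {u u' : ℝ → ℝ} {v : ℝ → E} {a b M : ℝ}

theorem norm_intervalIntegral_deriv_smul_le_of_deriv_nonpos (hab : a ≤ b)
    (hu : ∀ x ∈ uIcc a b, HasDerivAt u (u' x) x) (hu' : ∀ x ∈ Icc a b, u' x ≤ 0)
    (hM : ∀ x ∈ Icc a b, ‖v x‖ ≤ M) :
    ‖∫ x in a..b, u' x • v x‖ ≤ M * (u a - u b) := by
  have hu'_int : IntervalIntegrable u' volume a b :=
    intervalIntegrable_deriv_of_nonpos (HasDerivAt.continuousOn hu)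
      (fun x hx ↦ hu x (Ioo_subset_Icc_self hx))
      fun x hx ↦ hu' x (uIcc_of_le hab ▸ Ioo_subset_Icc_self hx)
  calc ‖∫ x in a..b, u' x • v x‖ ≤ ∫ x in a..b, M * -u' x := by
        refine intervalIntegral.norm_integral_le_of_norm_le hab
          (Eventually.of_forall fun x hx ↦ ?_) (hu'_int.neg.const_mul M)
        have hx := Ioc_subset_Icc_self hx
        rw [norm_smul, Real.norm_of_nonpos (hu' x hx), mul_comm]
        exact mul_le_mul_of_nonneg_right (hM x hx) (neg_nonneg.mpr (hu' x hx))
    _ = M * (u a - u b) := by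
        rw [intervalIntegral.integral_const_mul, intervalIntegral.integral_neg,
          intervalIntegral.integral_eq_sub_of_hasDerivAt hu hu'_int, neg_sub]

theorem norm_intervalIntegral_smul_deriv_le_of_deriv_nonpos [CompleteSpace E] {v' : ℝ → E}
    (hab : a ≤ b) (hu : ∀ x ∈ uIcc a b, HasDerivAt u (u' x) x) (hu' : ∀ x ∈ Icc a b, u' x ≤ 0)
    (hub : 0 ≤ u b) (hv : ∀ x ∈ uIcc a b, HasDerivAt v (v' x) x)
    (hv'_int : IntervalIntegrable v' volume a b) (hM : ∀ x ∈ Icc a b, ‖v x‖ ≤ M) :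
    ‖∫ x in a..b, u x • v' x‖ ≤ 2 * M * u a := by
  have hu_cont : ContinuousOn u (uIcc a b) := HasDerivAt.continuousOn hu
  have hu'_int : IntervalIntegrable u' volume a b :=
    intervalIntegrable_deriv_of_nonpos hu_cont (fun x hx ↦ hu x (Ioo_subset_Icc_self hx))
      fun x hx ↦ hu' x (uIcc_of_le hab ▸ Ioo_subset_Icc_self hx)
  have hu_anti : AntitoneOn u (Icc a b) :=
    antitoneOn_of_hasDerivWithinAt_nonpos (convex_Icc a b) (uIcc_of_le hab ▸ hu_cont)
      (fun x hx ↦ (hu x (Icc_subset_uIcc (interior_subset hx))).hasDerivWithinAt)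
      fun x hx ↦ hu' x (interior_subset hx)
  have ha : a ∈ Icc a b := left_mem_Icc.mpr hab
  have hb : b ∈ Icc a b := right_mem_Icc.mpr hab
  have norm_smul_le {x : ℝ} (hx : x ∈ Icc a b) : ‖u x • v x‖ ≤ M * u x := by
    have hux : 0 ≤ u x := hub.trans (hu_anti hx hb hx.2)
    rw [norm_smul_of_nonneg hux, mul_comm]
    exact mul_le_mul_of_nonneg_right (hM x hx) hux
  calc ‖∫ x in a..b, u x • v' x‖
      = ‖u b • v b - u a • v a - ∫ x in a..b, u' x • v x‖ := by
        rw [intervalIntegral.integral_smul_deriv_eq_deriv_smul hu hv hu'_int hv'_int]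
    _ ≤ ‖u b • v b‖ + ‖u a • v a‖ + ‖∫ x in a..b, u' x • v x‖ :=
        norm_sub_le_of_le (norm_sub_le _ _) le_rfl
    _ ≤ M * u b + M * u a + M * (u a - u b) :=
        add_le_add_three (norm_smul_le hb) (norm_smul_le ha)
          (norm_intervalIntegral_deriv_smul_le_of_deriv_nonpos hab hu hu' hM)
    _ = 2 * M * u a := by ring

end DerivNonpos

theorem continuous_intervalIntegral_add_right {E : Type*} [NormedAddCommGroup E]
    [NormedSpace ℝ E] {f : ℝ → E} {μ : Measure ℝ} [NullSingletonClass μ]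
    (hf : ∀ a b, IntervalIntegrable f μ a b) (θ : ℝ) :
    Continuous fun t ↦ ∫ s in t..(t + θ), f s ∂μ := by
  have h_primitive := intervalIntegral.continuous_primitive hf 0
  refine ((h_primitive.comp (continuous_add_const θ)).sub h_primitive).congr fun t ↦ ?_
  exact intervalIntegral.integral_interval_sub_left (hf _ _) (hf _ _)

theorem integrableOn_Ici_norm_rpow_of_isBigO_exp_neg {E : Type*} [NormedAddCommGroup E]
    {g : ℝ → E} {a γ p : ℝ} (hγ : 0 < γ) (hp : 0 < p) (hg : ContinuousOn g (Ici a))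
    (hO : g =O[atTop] fun t ↦ Real.exp (-γ * t)) :
    IntegrableOn (fun t ↦ ‖g t‖ ^ p) (Ici a) := by
  rw [integrableOn_Ici_iff_integrableOn_Ioi]
  refine integrable_of_isBigO_exp_neg (mul_pos hγ hp)
    (hg.norm.rpow_const fun _ _ ↦ Or.inr hp.le) ?_
  refine (hO.norm_left.rpow hp.le (Eventually.of_forall fun t ↦ (Real.exp_pos _).le)).congr_right
    fun t ↦ ?_
  rw [← Real.exp_mul]
  ring_nf

theorem abs_integral_exp_mul_sin_exp_le {α β a b : ℝ} (hβ : 0 < β) (hαβ : α ≤ β) (hab : a ≤ b) :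
    |∫ s in a..b, Real.exp (α * s) * Real.sin (Real.exp (β * s))|
      ≤ 2 / β * Real.exp (-(β - α) * a) := by
  let u : ℝ → ℝ := fun s ↦ Real.exp (-(β - α) * s) / β
  let u' : ℝ → ℝ := fun s ↦ Real.exp (-(β - α) * s) * -(β - α) / β
  let v : ℝ → ℝ := fun s ↦ -Real.cos (Real.exp (β * s))
  let v' : ℝ → ℝ := fun s ↦ Real.sin (Real.exp (β * s)) * (Real.exp (β * s) * β)
  have hu (s : ℝ) : HasDerivAt u (u' s) s :=
    (hasDerivAt_const_mul (-(β - α))).exp.div_const β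
  have hu' (s : ℝ) : u' s ≤ 0 :=
    div_nonpos_of_nonpos_of_nonneg
      (mul_nonpos_of_nonneg_of_nonpos (Real.exp_pos _).le (by linarith)) hβ.le
  have hv (s : ℝ) : HasDerivAt v (v' s) s :=
    (hasDerivAt_const_mul β).exp.cos.neg.congr_deriv (by simp only [v', neg_mul, neg_neg])
  have hv' : Continuous v' := by fun_prop
  have hv_bound (s : ℝ) : ‖v s‖ ≤ 1 := by
    simpa only [v, norm_neg, Real.norm_eq_abs] using Real.abs_cos_le_one _
  have h_factor (s : ℝ) : Real.exp (α * s) * Real.sin (Real.exp (β * s)) = u s • v' s := by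
    have h_exp : Real.exp (α * s) = Real.exp (-(β - α) * s) * Real.exp (β * s) := by
      rw [← Real.exp_add]; ring_nf
    simp only [u, v', smul_eq_mul, h_exp]
    field_simp
  calc |∫ s in a..b, Real.exp (α * s) * Real.sin (Real.exp (β * s))|
      = ‖∫ s in a..b, u s • v' s‖ := by simp only [h_factor, Real.norm_eq_abs]
    _ ≤ 2 * 1 * u a :=
        norm_intervalIntegral_smul_deriv_le_of_deriv_nonpos hab (fun s _ ↦ hu s)
          (fun s _ ↦ hu' s) (by positivity) (fun s _ ↦ hv s) (hv'.intervalIntegrable a b)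
          (fun s _ ↦ hv_bound s)
    _ = 2 / β * Real.exp (-(β - α) * a) := by ring

theorem oscillatory_example_interval_average_decay_and_Lp_general
    {α β : ℝ} (hβ : 0 < β) (hαβ : α < β) {θ : ℝ} (hθ : 0 ≤ θ) :
    (∀ t, |∫ s in t..(t + θ), Real.exp (α * s) * Real.sin (Real.exp (β * s))|
        ≤ 2 / β * Real.exp (-(β - α) * t)) ∧
    ∀ p > (0 : ℝ),
      IntegrableOn
        (fun t ↦ |∫ s in t..(t + θ), Real.exp (α * s) * Real.sin (Real.exp (β * s))| ^ p)
        (Ici 0) := by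
  have h_decay (t : ℝ) :=
    abs_integral_exp_mul_sin_exp_le hβ hαβ.le (le_add_of_nonneg_right hθ : t ≤ t + θ)
  have h_cont : Continuous fun s ↦ Real.exp (α * s) * Real.sin (Real.exp (β * s)) := by fun_prop
  refine ⟨h_decay, fun p hp ↦ ?_⟩
  refine integrableOn_Ici_norm_rpow_of_isBigO_exp_neg (sub_pos.mpr hαβ) hp
    (continuous_intervalIntegral_add_right h_cont.intervalIntegrable θ).continuousOn
    (.of_bound (2 / β) (Eventually.of_forall fun t ↦ ?_))
  simpa only [Real.norm_eq_abs, Real.abs_exp] using h_decay t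

/-- the example: for `0 < α < β` and `f(t) = e^{αt} sin(e^{βt})`, for every
`θ > 0` there are `C > 0` and `T ≥ 0` with `|∫_t^{t+θ} f(s) ds| ≤ C e^{-(β-α)t}` for `t ≥ T`;
in particular for every `p ≥ 1` and `θ > 0` the interval average `t ↦ ∫_t^{t+θ} f(s) ds`
belongs to `L^p([0,∞))`. -/
theorem oscillatory_example_interval_average_decay_and_Lp
    (α β : ℝ) (hα : 0 < α) (hαβ : α < β) :
    (∀ θ > (0:ℝ), ∃ C > (0:ℝ), ∃ T ≥ (0:ℝ), ∀ t ≥ T,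
        |∫ s in t..(t + θ), Real.exp (α * s) * Real.sin (Real.exp (β * s))|
          ≤ C * Real.exp (-(β - α) * t)) ∧
    ∀ p ≥ (1:ℝ), ∀ θ > (0:ℝ),
      IntegrableOn
        (fun t => |∫ s in t..(t + θ), Real.exp (α * s) * Real.sin (Real.exp (β * s))| ^ p)
        (Ici 0) := by
  have hβ : 0 < β := hα.trans hαβ
  have h_general {θ : ℝ} (hθ : 0 < θ) :=
    oscillatory_example_interval_average_decay_and_Lp_general hβ hαβ hθ.le
  exact ⟨fun θ hθ ↦ ⟨2 / β, by positivity, 0, le_rfl, fun t _ ↦ (h_general hθ).1 t⟩,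
    fun p hp θ hθ ↦ (h_general hθ).2 p (one_pos.trans_le hp)⟩
end

section
/- Let 0 < α < β and define f(t) = e^{αt} sin(e^{βt}) for t ≥ 0. Then for every p ≥ 1, ∫_0^∞ |f(s)|^p ds = ∞; that is, f does not belong to L^p([0,∞)) for any p ≥ 1. -/
open MeasureTheory Set Filter

/-!
The substitution `u = exp (β * t)` turns `∫ h (exp (β * t)) dt` into `β⁻¹ ∫ h u / u du`. For a
`T`-periodic `h ≥ 0` of positive integral over a period, this diverges like `∫ du / u`: as `1 / u`
is decreasing, each period contributes at least the mean of `h` times the integral of `1 / u` over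
the next period. Apply this to `h u = |sin u| ^ p`, since `exp (α * t) ^ p` is bounded below by a
positive constant on every half-line `[a, ∞)`.
-/

open scoped ENNReal

section Periodic

variable {T : ℝ} {h : ℝ → ℝ≥0∞}

theorem setLIntegral_Ioc_eq_of_periodic (hT : 0 < T) (hh : Function.Periodic h T) (a b : ℝ) :
    ∫⁻ u in Ioc a (a + T), h u = ∫⁻ u in Ioc b (b + T), h u :=
  (isAddFundamentalDomain_Ioc hT a).setLIntegral_eq (isAddFundamentalDomain_Ioc hT b) h
    hh.map_vadd_zmultiples

theorem lintegral_Ioi_eq_tsum_Ioc (hT : 0 < T) (a : ℝ) (g : ℝ → ℝ≥0∞) :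
    ∫⁻ u in Ioi a, g u = ∑' n : ℕ, ∫⁻ u in Ioc (a + n * T) (a + n * T + T), g u := by
  have hmono : Monotone fun n : ℕ => a + n * T := fun m n hmn => by
    dsimp only
    gcongr
  have hunbdd : ¬BddAbove (range fun n : ℕ => a + n * T) :=
    not_bddAbove_of_tendsto_atTop (tendsto_atTop_add_const_left _ a
      (tendsto_natCast_atTop_atTop.atTop_mul_const hT))
  have hsucc (n : ℕ) : a + n * T + T = a + (Order.succ n : ℕ) * T := by
    rw [Nat.succ_eq_succ, Nat.cast_succ]
    ring
  simp only [hsucc]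
  rw [← lintegral_iUnion (fun _ => measurableSet_Ioc) hmono.pairwise_disjoint_on_Ioc_succ,
    iUnion_Ioc_map_succ_eq_Ioi (fun n => hmono bot_le) hunbdd]
  simp

theorem lintegral_period_mul_lintegral_Ioi_le {w : ℝ → ℝ≥0∞} {a : ℝ} (hT : 0 < T)
    (hh : Function.Periodic h T) (hw : AntitoneOn w (Ioi a)) :
    (∫⁻ u in Ioc a (a + T), h u) * ∫⁻ u in Ioi (a + T), w u ≤
      ENNReal.ofReal T * ∫⁻ u in Ioi a, w u * h u := by
  have mem_Ioi_of_le (n : ℕ) {u : ℝ} (hu : a + T + n * T ≤ u) : u ∈ Ioi a :=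
    lt_of_lt_of_le (by rw [add_assoc]; exact lt_add_of_pos_right a (by positivity)) hu
  have weight_le (n : ℕ) : ∫⁻ u in Ioc (a + T + n * T) (a + T + n * T + T), w u ≤
      ENNReal.ofReal T * w (a + T + n * T) :=
    calc _ ≤ ∫⁻ _ in Ioc (a + T + n * T) (a + T + n * T + T), w (a + T + n * T) :=
          setLIntegral_mono' measurableSet_Ioc fun u hu =>
            hw (mem_Ioi_of_le n le_rfl) (mem_Ioi_of_le n hu.1.le) hu.1.le
      _ = _ := by rw [setLIntegral_const, Real.volume_Ioc, add_sub_cancel_left, mul_comm]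
  have le_weighted (n : ℕ) : w (a + T + n * T) * ∫⁻ u in Ioc a (a + T), h u ≤
      ∫⁻ u in Ioc (a + n * T) (a + n * T + T), w u * h u := by
    rw [setLIntegral_Ioc_eq_of_periodic hT hh a (a + n * T), add_right_comm a T]
    refine (lintegral_const_mul_le _ _).trans
      (setLIntegral_mono' measurableSet_Ioc fun u hu => ?_)
    gcongr
    refine hw (lt_of_le_of_lt ?_ hu.1) (mem_Ioi_of_le n (by rw [add_right_comm])) hu.2
    exact le_add_of_nonneg_right (by positivity)
  rw [lintegral_Ioi_eq_tsum_Ioc hT (a + T), lintegral_Ioi_eq_tsum_Ioc hT a,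
    ← ENNReal.tsum_mul_left, ← ENNReal.tsum_mul_left]
  refine ENNReal.tsum_le_tsum fun n => ?_
  calc _ ≤ (∫⁻ u in Ioc a (a + T), h u) * (ENNReal.ofReal T * w (a + T + n * T)) := by
        gcongr
        exact weight_le n
    _ = ENNReal.ofReal T * (w (a + T + n * T) * ∫⁻ u in Ioc a (a + T), h u) := by ring
    _ ≤ _ := by
        gcongr
        exact le_weighted n

theorem lintegral_Ioi_ofReal_inv_eq_top {a : ℝ} (ha : 0 ≤ a) :
    ∫⁻ u in Ioi a, ENNReal.ofReal u⁻¹ = ⊤ := by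
  by_contra hfin
  refine not_integrableOn_Ioi_inv ((lintegral_ofReal_ne_top_iff_integrable
    measurable_inv.aestronglyMeasurable ?_).1 hfin)
  filter_upwards [ae_restrict_mem measurableSet_Ioi] with u hu
  exact inv_nonneg.2 (ha.trans hu.le)

theorem lintegral_Ioi_ofReal_inv_mul_periodic_eq_top {a : ℝ} (ha : 0 ≤ a) (hT : 0 < T)
    (hh : Function.Periodic h T) (hpos : ∫⁻ u in Ioc 0 T, h u ≠ 0) :
    ∫⁻ u in Ioi a, ENNReal.ofReal u⁻¹ * h u = ⊤ := by
  have hanti : AntitoneOn (fun u : ℝ => ENNReal.ofReal u⁻¹) (Ioi a) := fun u hu v _ huv =>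
    ENNReal.ofReal_le_ofReal (inv_anti₀ (ha.trans_lt hu) huv)
  have hperiod : ∫⁻ u in Ioc a (a + T), h u ≠ 0 := by
    rwa [setLIntegral_Ioc_eq_of_periodic hT hh a 0, zero_add]
  have hle := lintegral_period_mul_lintegral_Ioi_le hT hh hanti
  rw [lintegral_Ioi_ofReal_inv_eq_top (by positivity), ENNReal.mul_top hperiod, top_le_iff] at hle
  by_contra hfin
  exact ENNReal.mul_ne_top ENNReal.ofReal_ne_top hfin hle

end Periodic

section Exp

variable {β : ℝ}

theorem lintegral_image_exp_mul_ofReal_inv_mul (hβ : β ≠ 0) {s : Set ℝ} (hs : MeasurableSet s)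
    (h : ℝ → ℝ≥0∞) :
    ∫⁻ u in (fun t => Real.exp (β * t)) '' s, ENNReal.ofReal u⁻¹ * h u =
      ENNReal.ofReal |β| * ∫⁻ t in s, h (Real.exp (β * t)) := by
  have hderiv (t : ℝ) : HasDerivAt (fun t => Real.exp (β * t)) (Real.exp (β * t) * β) t := by
    simpa only [mul_one] using ((hasDerivAt_id' t).const_mul β).exp
  have hinj : Function.Injective fun t => Real.exp (β * t) :=
    Real.exp_injective.comp (mul_right_injective₀ hβ)
  rw [lintegral_image_eq_lintegral_abs_deriv_mul hs (fun t _ => (hderiv t).hasDerivWithinAt)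
    hinj.injOn, ← lintegral_const_mul' _ _ ENNReal.ofReal_ne_top]
  refine lintegral_congr fun t => ?_
  rw [← mul_assoc, ← ENNReal.ofReal_mul (abs_nonneg _), abs_mul, Real.abs_exp,
    mul_right_comm, mul_inv_cancel₀ (Real.exp_ne_zero _), one_mul]

theorem Ioi_exp_subset_image_exp_mul (hβ : 0 < β) (a : ℝ) :
    Ioi (Real.exp (β * a)) ⊆ (fun t => Real.exp (β * t)) '' Ici a := by
  intro u hu
  have hu0 : 0 < u := (Real.exp_pos _).trans hu
  refine ⟨Real.log u / β, ?_, ?_⟩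
  · rw [mem_Ici, le_div_iff₀' hβ]
    exact ((Real.lt_log_iff_exp_lt hu0).2 hu).le
  · dsimp only
    rw [mul_div_cancel₀ _ hβ.ne', Real.exp_log hu0]

theorem lintegral_Ici_periodic_comp_exp_mul_eq_top {T : ℝ} {h : ℝ → ℝ≥0∞} (hβ : 0 < β) (hT : 0 < T)
    (hh : Function.Periodic h T) (hpos : ∫⁻ u in Ioc 0 T, h u ≠ 0) (a : ℝ) :
    ∫⁻ t in Ici a, h (Real.exp (β * t)) = ⊤ := by
  have htop : ENNReal.ofReal |β| * ∫⁻ t in Ici a, h (Real.exp (β * t)) = ⊤ := by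
    rw [← lintegral_image_exp_mul_ofReal_inv_mul hβ.ne' measurableSet_Ici, ← top_le_iff,
      ← lintegral_Ioi_ofReal_inv_mul_periodic_eq_top (Real.exp_nonneg (β * a)) hT hh hpos]
    exact lintegral_mono_set (Ioi_exp_subset_image_exp_mul hβ a)
  by_contra hfin
  exact ENNReal.mul_ne_top ENNReal.ofReal_ne_top hfin htop

end Exp

theorem periodic_abs_sin : Function.Periodic (fun u => |Real.sin u|) Real.pi := fun u => by
  simp only [Real.sin_add_pi, abs_neg]

theorem lintegral_Ioc_abs_sin_rpow_ne_zero (p : ℝ) :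
    ∫⁻ u in Ioc 0 Real.pi, ENNReal.ofReal (|Real.sin u| ^ p) ≠ 0 := by
  have hsupport : Ioo 0 Real.pi ⊆
      Function.support (fun u => ENNReal.ofReal (|Real.sin u| ^ p)) ∩ Ioc 0 Real.pi :=
    fun u hu => ⟨(ENNReal.ofReal_pos.2 (Real.rpow_pos_of_pos
      (abs_pos.2 (Real.sin_pos_of_mem_Ioo hu).ne') p)).ne', Ioo_subset_Ioc_self hu⟩
  refine ((setLIntegral_pos_iff (by fun_prop)).2 (lt_of_lt_of_le ?_ (measure_mono hsupport))).ne'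
  rw [Real.volume_Ioo, sub_zero]
  exact ENNReal.ofReal_pos.2 Real.pi_pos

theorem lintegral_Ici_abs_sin_exp_mul_rpow_eq_top {β : ℝ} (hβ : 0 < β) (p a : ℝ) :
    ∫⁻ s in Ici a, ENNReal.ofReal (|Real.sin (Real.exp (β * s))| ^ p) = ⊤ :=
  lintegral_Ici_periodic_comp_exp_mul_eq_top hβ Real.pi_pos
    (periodic_abs_sin.comp fun x => ENNReal.ofReal (x ^ p))
    (lintegral_Ioc_abs_sin_rpow_ne_zero p) a

theorem oscillatory_example_not_Lp_general {α β p : ℝ} (hα : 0 ≤ α) (hβ : 0 < β) (hp : 0 ≤ p)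
    (a : ℝ) :
    (∫⁻ s in Ici a,
        ENNReal.ofReal (|Real.exp (α * s) * Real.sin (Real.exp (β * s))| ^ p)) = ⊤ ∧
    ¬ IntegrableOn
        (fun s => |Real.exp (α * s) * Real.sin (Real.exp (β * s))| ^ p) (Ici a) := by
  have hpos : ENNReal.ofReal (Real.exp (α * a) ^ p) ≠ 0 := by
    rw [ENNReal.ofReal_ne_zero_iff]
    positivity
  suffices htop : ∫⁻ s in Ici a,
      ENNReal.ofReal (|Real.exp (α * s) * Real.sin (Real.exp (β * s))| ^ p) = ⊤ from
    ⟨htop, fun hint => hint.lintegral_lt_top.ne htop⟩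
  rw [← top_le_iff, ← ENNReal.mul_top hpos, ← lintegral_Ici_abs_sin_exp_mul_rpow_eq_top hβ p a,
    ← lintegral_const_mul' _ _ ENNReal.ofReal_ne_top]
  refine setLIntegral_mono' measurableSet_Ici fun s (hs : a ≤ s) => ?_
  rw [← ENNReal.ofReal_mul (by positivity), abs_mul, Real.abs_exp,
    Real.mul_rpow (by positivity) (by positivity)]
  gcongr

/-- for `0 < α < β` and `f(t) = e^{αt} sin(e^{βt})`, for every `p ≥ 1` one
has `∫_0^∞ |f(s)|^p ds = ∞`; that is, `f ∉ L^p([0,∞))` for any `p ≥ 1`. -/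
theorem oscillatory_example_not_Lp
    (α β : ℝ) (hα : 0 < α) (hαβ : α < β) :
    ∀ p ≥ (1:ℝ),
      (∫⁻ s in Ici (0:ℝ),
          ENNReal.ofReal (|Real.exp (α * s) * Real.sin (Real.exp (β * s))| ^ p)) = ⊤ ∧
      ¬ IntegrableOn
          (fun s => |Real.exp (α * s) * Real.sin (Real.exp (β * s))| ^ p) (Ici 0) :=
  fun _ hp => oscillatory_example_not_Lp_general hα.le (hα.trans hαβ) (zero_le_one.trans hp) 0
end
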